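/- Let μ ∈ ℝ, μ ≠ 0, let A₀, A₁, A₂, A₃, A₄ ∈ ℝ, let λ ∈ ℝ, λ ≠ 0, and let h : ℝ → ℝ be smooth satisfying for all x ∈ ℝ the trigonometric second-order equation with parameters (μ, A₀, A₁, A₂, A₃, A₄): ((A₀h − A₁)h'³ + A₃cos(μx) + (A₄/μ)sin(μx))·h'' + A₀h'⁵ + ((μ²/2)A₀h² − μ²A₁h + A₂)·h'³ + μ(A₃sin(μx) − (A₄/μ)cos(μx))·h' = 0. Then the function λ·h satisfies for all x ∈ ℝ the trigonometric second-order equation with parameters (μ, A₀/λ, A₁, λA₂, λ³A₃, λ³A₄). -/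

import Mathlib

/-- The trigonometric second-order equation with parameters (μ, A₀, A₁, A₂, A₃, A₄),
stated for a function `h` at every point `x`. -/
def TrigODE (μ A0 A1 A2 A3 A4 : ℝ) (h : ℝ → ℝ) : Prop :=
  ∀ x : ℝ,
    ((A0 * h x - A1) * (deriv h x)^3
        + A3 * Real.cos (μ * x) + A4 / μ * Real.sin (μ * x)) * deriv (deriv h) x
      + A0 * (deriv h x)^5
      + (μ^2 / 2 * A0 * (h x)^2 - μ^2 * A1 * h x + A2) * (deriv h x)^3
      + μ * (A3 * Real.sin (μ * x) - A4 / μ * Real.cos (μ * x)) * deriv h x = 0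

/-!
The left-hand side of the equation is isobaric of weight 4 when `h` and its derivatives have
weight 1 and `A₀`, `A₁`, `A₂`, `A₃`, `A₄` have weights -1, 0, 1, 3, 3. Rescaling everything
according to its weight therefore multiplies the left-hand side by `λ⁴`.
-/

/-- The left-hand side of the trigonometric second-order equation, as a function of `x`;
it is named so that its behaviour under dilations can be stated as an identity. -/
noncomputable def trigResidual (μ A0 A1 A2 A3 A4 : ℝ) (h : ℝ → ℝ) (x : ℝ) : ℝ :=
  ((A0 * h x - A1) * (deriv h x) ^ 3
      + A3 * Real.cos (μ * x) + A4 / μ * Real.sin (μ * x)) * deriv (deriv h) x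
    + A0 * (deriv h x) ^ 5
    + (μ ^ 2 / 2 * A0 * (h x) ^ 2 - μ ^ 2 * A1 * h x + A2) * (deriv h x) ^ 3
    + μ * (A3 * Real.sin (μ * x) - A4 / μ * Real.cos (μ * x)) * deriv h x

theorem trigODE_iff_trigResidual_eq_zero {μ A0 A1 A2 A3 A4 : ℝ} {h : ℝ → ℝ} :
    TrigODE μ A0 A1 A2 A3 A4 h ↔ ∀ x, trigResidual μ A0 A1 A2 A3 A4 h x = 0 :=
  Iff.rfl

theorem trigResidual_const_mul (μ A0 A1 A2 A3 A4 : ℝ) {lam : ℝ} (hlam : lam ≠ 0)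
    (h : ℝ → ℝ) (x : ℝ) :
    trigResidual μ (A0 / lam) A1 (lam * A2) (lam ^ 3 * A3) (lam ^ 3 * A4)
        (fun y => lam * h y) x =
      lam ^ 4 * trigResidual μ A0 A1 A2 A3 A4 h x := by
  obtain ⟨B0, rfl⟩ : ∃ B0, A0 = B0 * lam := ⟨A0 / lam, (div_mul_cancel₀ A0 hlam).symm⟩
  simp only [trigResidual, deriv_const_mul_field', mul_div_cancel_right₀ B0 hlam]
  ring

theorem stmt_18_general {μ A0 A1 A2 A3 A4 lam : ℝ} (_hμ : μ ≠ 0) (hlam : lam ≠ 0)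
    {h : ℝ → ℝ} :
    TrigODE μ (A0 / lam) A1 (lam * A2) (lam ^ 3 * A3) (lam ^ 3 * A4) (fun x => lam * h x) ↔
      TrigODE μ A0 A1 A2 A3 A4 h := by
  simp only [trigODE_iff_trigResidual_eq_zero, trigResidual_const_mul _ _ _ _ _ _ hlam,
    mul_eq_zero, pow_eq_zero_iff four_ne_zero, hlam, false_or]

theorem stmt_18 (μ A0 A1 A2 A3 A4 lam : ℝ) (hμ : μ ≠ 0) (hlam : lam ≠ 0) (h : ℝ → ℝ)
    (hh : ContDiff ℝ (⊤ : ℕ∞) h)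
    (hode : TrigODE μ A0 A1 A2 A3 A4 h) :
    TrigODE μ (A0 / lam) A1 (lam * A2) (lam^3 * A3) (lam^3 * A4)
      (fun x => lam * h x) :=
  (stmt_18_general hμ hlam).mpr hode
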